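/- arXiv:2504.10138 — 2 statements merged into one kernel-verified Lean document; each statement's English description precedes it below -/
import Mathlib

section
/- Let n ≥ 16 be an integer and suppose 2^{n−2} = d1·((10^ℓ−1)/9)·10^{ℓ+m} + d2·((10^m−1)/9)·10^ℓ + d1·((10^ℓ−1)/9) for digits d1, d2 ∈ {0,…,9} with d1 > 0, d1 ≠ d2 and integers ℓ, m ≥ 1. Then ℓ + m ≤ 13. -/
/-!
Let `N` be the palindrome with digit blocks `d…d e…e d…d` of lengths `ℓ`, `m`, `ℓ` in base `b`.
Summing the geometric series in `(b - 1) * N` leaves `(d - e) * b ^ ℓ - d` modulo `b ^ (ℓ + m)`.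
In base ten, `2 ^ 8 ∣ N` and `8 ≤ ℓ + m` therefore force `2 ^ 8 ∣ (d - e) * 10 ^ ℓ - d`.
For `4 ≤ ℓ` this gives `16 ∣ d`, which no nonzero digit satisfies, and for `ℓ = 1, 2, 3` only
finitely many pairs of digits remain; none of them works.
-/

open Finset

section Semiring

variable {R : Type*} [Semiring R]

/-- The repdigit with digit `d` repeated `k` times in base `b`. It is defined through the geometric
sum, without division, so that it makes sense in any semiring. -/
def repdigit (b d : R) (k : ℕ) : R :=
  d * ∑ i ∈ range k, b ^ i

/-- The palindromic concatenation, in base `b`, of `ℓ` digits `d`, `m` digits `e` and again `ℓ`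
digits `d`. -/
def repdigitPalindrome (b d e : R) (ℓ m : ℕ) : R :=
  repdigit b d ℓ * b ^ (ℓ + m) + repdigit b e m * b ^ ℓ + repdigit b d ℓ

theorem natCast_repdigit (b d k : ℕ) :
    ((repdigit b d k : ℕ) : R) = repdigit (b : R) (d : R) k := by
  simp [repdigit]

theorem natCast_repdigitPalindrome (b d e ℓ m : ℕ) :
    ((repdigitPalindrome b d e ℓ m : ℕ) : R) = repdigitPalindrome (b : R) (d : R) (e : R) ℓ m := by
  simp [repdigitPalindrome, natCast_repdigit]

end Semiring

theorem repdigit_eq_mul_div {b : ℕ} (hb : 2 ≤ b) (d k : ℕ) :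
    repdigit b d k = d * ((b ^ k - 1) / (b - 1)) := by
  rw [repdigit, Nat.geomSum_eq hb]

section CommRing

variable {R : Type*} [CommRing R]

theorem repdigit_mul_sub_one (b d : R) (k : ℕ) :
    repdigit b d k * (b - 1) = d * (b ^ k - 1) := by
  rw [repdigit, mul_assoc, geom_sum_mul]

theorem repdigitPalindrome_mul_sub_one (b d e : R) (ℓ m : ℕ) :
    repdigitPalindrome b d e ℓ m * (b - 1) =
      (d * b ^ ℓ - d + e) * b ^ (ℓ + m) + ((d - e) * b ^ ℓ - d) := by
  unfold repdigitPalindrome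
  linear_combination (b ^ (ℓ + m) + 1) * repdigit_mul_sub_one b d ℓ +
    b ^ ℓ * repdigit_mul_sub_one b e m

theorem dvd_sub_mul_pow_sub_of_dvd_repdigitPalindrome {a b d e : R} {ℓ m : ℕ}
    (ha : a ∣ repdigitPalindrome b d e ℓ m) (hb : a ∣ b ^ (ℓ + m)) :
    a ∣ (d - e) * b ^ ℓ - d := by
  have h := ha.mul_right (b - 1)
  rw [repdigitPalindrome_mul_sub_one] at h
  exact (dvd_add_right (hb.mul_left _)).mp h

end CommRing

theorem two_pow_dvd_ten_pow {j k : ℕ} (h : j ≤ k) : (2 : ℤ) ^ j ∣ 10 ^ k :=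
  (pow_dvd_pow 2 h).trans (pow_dvd_pow_of_dvd (by norm_num) k)

theorem not_two_pow_four_dvd_mul_ten_pow_sub {d : ℤ} (hd : 0 < d) (hd' : d ≤ 9) (c : ℤ)
    {ℓ : ℕ} (hℓ : 4 ≤ ℓ) : ¬ 2 ^ 4 ∣ c * 10 ^ ℓ - d := by
  rw [dvd_sub_right ((two_pow_dvd_ten_pow hℓ).mul_left c)]
  omega

theorem not_two_pow_eight_dvd_sub_mul_ten_pow_sub {d e : ℤ} (hd : 0 < d) (hd' : d ≤ 9)
    (he : 0 ≤ e) (he' : e ≤ 9) {ℓ : ℕ} (hℓ : 0 < ℓ) :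
    ¬ 2 ^ 8 ∣ (d - e) * 10 ^ ℓ - d := by
  obtain hℓ' | hℓ' := le_or_gt 4 ℓ
  · exact fun h ↦ not_two_pow_four_dvd_mul_ten_pow_sub hd hd' (d - e) hℓ'
      ((pow_dvd_pow 2 (by norm_num)).trans h)
  · interval_cases ℓ <;> interval_cases d <;> omega

/-- Both constants are optimal: `888 3333 888` is divisible by `2 ^ 8` and has `ℓ + m = 7`, while
`888 33333 888` is divisible by `2 ^ 7` and has `ℓ + m = 8`. -/
theorem pow_two_palindrome_ell_add_m_le_thirteen_general {d e ℓ : ℕ} (m : ℕ)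
    (hd : 0 < d) (hd' : d ≤ 9) (he : e ≤ 9) (hℓ : 0 < ℓ)
    (h : 2 ^ 8 ∣ d * ((10 ^ ℓ - 1) / 9) * 10 ^ (ℓ + m)
        + e * ((10 ^ m - 1) / 9) * 10 ^ ℓ
        + d * ((10 ^ ℓ - 1) / 9)) :
    ℓ + m ≤ 7 := by
  by_contra! hlen
  have hN : 2 ^ 8 ∣ repdigitPalindrome 10 d e ℓ m := by
    simpa only [repdigitPalindrome, repdigit_eq_mul_div (b := 10) (by norm_num)] using h
  have hN' : (2 : ℤ) ^ 8 ∣ repdigitPalindrome 10 (d : ℤ) e ℓ m := by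
    simpa only [natCast_repdigitPalindrome, Nat.cast_pow, Nat.cast_ofNat] using
      Int.natCast_dvd_natCast.mpr hN
  exact not_two_pow_eight_dvd_sub_mul_ten_pow_sub (by omega) (by omega) (by omega) (by omega) hℓ
    (dvd_sub_mul_pow_sub_of_dvd_repdigitPalindrome hN' (two_pow_dvd_ten_pow hlen))

/-- If n ≥ 16 and 2^{n−2} is a palindromic concatenation of two distinct
repdigits with parameters ℓ, m ≥ 1, then ℓ + m ≤ 13. -/
theorem pow_two_palindrome_ell_add_m_le_thirteen
    (n : ℕ) (hn : 16 ≤ n)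
    (d1 d2 : ℕ) (hd1 : d1 ≤ 9) (hd2 : d2 ≤ 9) (hd1pos : 0 < d1) (hne : d1 ≠ d2)
    (ℓ m : ℕ) (hℓ : 1 ≤ ℓ) (hm : 1 ≤ m)
    (heq : 2 ^ (n - 2) = d1 * ((10 ^ ℓ - 1) / 9) * 10 ^ (ℓ + m)
        + d2 * ((10 ^ m - 1) / 9) * 10 ^ ℓ
        + d1 * ((10 ^ ℓ - 1) / 9)) :
    ℓ + m ≤ 13 :=
  (pow_two_palindrome_ell_add_m_le_thirteen_general m hd1pos hd1 hd2 hℓ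
    (heq ▸ pow_dvd_pow 2 (by omega))).trans (by norm_num)
end

section
/- Suppose the integers k ≥ 2, n ≥ 9 with n ≥ k + 1, ℓ ≥ 1, m ≥ 1 and digits d1, d2 ∈ {0,…,9} with d1 > 0, d1 ≠ d2 satisfy F_n^(k) = d1·((10^ℓ−1)/9)·10^{ℓ+m} + d2·((10^m−1)/9)·10^ℓ + d1·((10^ℓ−1)/9). Then |(9/(d1·10^ℓ − (d1 − d2)))·10^{−(ℓ+m)}·f_k(α)·α^{n−1} − 1| < 11·10^{−m}, where α is the unique real root greater than 1 of Ψ_k(x) = x^k − x^{k−1} − ⋯ − x − 1 and f_k(x) = (x − 1)/(2 + (k + 1)(x − 2)). -/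
/-!
A solution of the k-bonacci recurrence has a component along the dominant root `α`, and the
coefficients of `Ψ_k(x) / (x - α)` define a functional that reads this component off. For the
Fibonacci initial values the component is `f_k(α) α^(n-1)`, so the error
`e_n = F_n - f_k(α) α^(n-1)` is killed by the functional. As all these coefficients are positive,
`k` consecutive errors never have the same strict sign. On the other hand
`e_(n+k+1) = 2 e_(n+k) - e_n`, so a first error exceeding the bound `1`, which holds on the initial
window, would be followed by `k - 1` still larger ones. Hence `|e_n| ≤ 1`.

With `D = d₁ 10^ℓ - (d₁ - d₂)` the decimal expansion reads
`9 F_n = 10^(ℓ+m) D + (d₁ - d₂) 10^ℓ - d₁`, where `|(d₁ - d₂) 10^ℓ - d₁| ≤ 10^ℓ D` and `D ≥ 1`;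
dividing `|9 f_k(α) α^(n-1) - 10^(ℓ+m) D| ≤ 9 + 10^ℓ D` by `10^(ℓ+m) D` gives the estimate.
-/

open Finset

section Recurrence

variable {R : Type*} [CommRing R] {k : ℕ}

/-- The k-bonacci recurrence `u (i + k) = u i + ⋯ + u (i + k - 1)`, whose characteristic polynomial
is `Ψ_k`. -/
def kBonacci (R : Type*) [CommRing R] (k : ℕ) : LinearRecurrence R where
  order := k
  coeffs _ := 1

theorem kBonacci_isSolution_iff {u : ℕ → R} :
    (kBonacci R k).IsSolution u ↔ ∀ i, u (i + k) = ∑ j ∈ range k, u (i + j) := by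
  refine forall_congr' fun i ↦ ?_
  change u (i + k) = ∑ j : Fin k, 1 * u (i + j) ↔ _
  simp only [one_mul, Fin.sum_univ_eq_sum_range fun j ↦ u (i + j)]

theorem kBonacci_isSolution_add_succ {u : ℕ → R} (hu : (kBonacci R k).IsSolution u) (i : ℕ) :
    u (i + k + 1) = 2 * u (i + k) - u i := by
  rw [kBonacci_isSolution_iff] at hu
  have hshift : ∑ j ∈ range k, u (i + 1 + j) + u i = ∑ j ∈ range k, u (i + j) + u (i + k) := by
    rw [← sum_range_succ fun j ↦ u (i + j), sum_range_succ']
    simp only [add_zero, add_right_comm i 1, ← add_assoc]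
  rw [add_right_comm, hu (i + 1)]
  linear_combination hshift - hu i

theorem pow_mul_two_sub_eq_one {a : R} (ha : a ^ k = ∑ i ∈ range k, a ^ i) :
    a ^ k * (2 - a) = 1 := by
  linear_combination (1 - a) * ha - geom_sum_mul a k

end Recurrence

section MaximumPrinciple

variable {R : Type*} [CommRing R] [LinearOrder R] [IsStrictOrderedRing R] {k : ℕ} {w e : ℕ → R}
  {B : R}

theorem le_of_forall_lt_le_of_sum_eq_zero (hk : 0 < k) (hw : ∀ j < k, 0 < w j)
    (hrec : ∀ i, e (i + k + 1) = 2 * e (i + k) - e i) {i : ℕ} (hi : k < i)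
    (hsum : ∑ j ∈ range k, w j * e (i + j) = 0) (hB : 0 ≤ B) (hlt : ∀ j < i, e j ≤ B) :
    e i ≤ B := by
  by_contra! hBi
  have hwindow : ∀ j < k, B < e (i + j) := by
    intro j hj
    induction j with
    | zero => exact hBi
    | succ j ih =>
      obtain ⟨s, hs⟩ : ∃ s, i + j = s + k := ⟨i + j - k, by lia⟩
      have hprev : B < e (s + k) := hs ▸ ih (by lia)
      have hold : e s ≤ B := hlt s (by lia)
      rw [← add_assoc, hs, hrec s]
      linarith
  have hpos : 0 < ∑ j ∈ range k, w j * e (i + j) :=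
    sum_pos (fun j hj ↦ mul_pos (hw j (mem_range.1 hj)) (hB.trans_lt (hwindow j (mem_range.1 hj))))
      (nonempty_range_iff.2 hk.ne')
  exact hpos.ne' hsum

theorem abs_le_of_forall_sum_eq_zero (hk : 0 < k) (hw : ∀ j < k, 0 < w j)
    (hrec : ∀ i, e (i + k + 1) = 2 * e (i + k) - e i)
    (hsum : ∀ i, ∑ j ∈ range k, w j * e (i + j) = 0) (hinit : ∀ i ≤ k, |e i| ≤ B) (i : ℕ) :
    |e i| ≤ B := by
  have hB : 0 ≤ B := (abs_nonneg _).trans (hinit 0 k.zero_le)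
  induction i using Nat.strong_induction_on with
  | _ i ih =>
    rcases le_or_gt i k with hi | hi
    · exact hinit i hi
    refine abs_le'.2 ⟨?_, ?_⟩
    · exact le_of_forall_lt_le_of_sum_eq_zero hk hw hrec hi (hsum i) hB fun j hj ↦
        (abs_le'.1 (ih j hj)).1
    · refine le_of_forall_lt_le_of_sum_eq_zero (e := fun j ↦ -e j) hk hw
        (fun j ↦ by rw [hrec]; ring) hi ?_ hB fun j hj ↦ (abs_le'.1 (ih j hj)).2
      simp only [mul_neg, sum_neg_distrib, hsum i, neg_zero]

end MaximumPrinciple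

section DominantComponent

variable {K : Type*} [Field K] {k : ℕ} {a : K}

/-- The functional `∑ j < k, (1 - a^(-(j+1))) u (i + j)` of the window of `u` at `i`. For a root `a`
of `Ψ_k` its weights are `a - 1` times the coefficients of `Ψ_k(x) / (x - a)`, so that it measures
the component along `a` of a solution of the k-bonacci recurrence. -/
def dominantSum (k : ℕ) (a : K) (u : ℕ → K) (i : ℕ) : K :=
  ∑ j ∈ range k, (1 - a⁻¹ ^ (j + 1)) * u (i + j)

/-- The function `f_k`, whose value at a root `a` of `Ψ_k` is the coefficient of `a^(n-1)` in the
Binet formula for `F_n`. -/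
def binetCoeff (k : ℕ) (a : K) : K :=
  (a - 1) / (2 + ((k : K) + 1) * (a - 2))

theorem dominantSum_sub (u v : ℕ → K) (i : ℕ) :
    dominantSum k a (fun j ↦ u j - v j) i = dominantSum k a u i - dominantSum k a v i := by
  simp only [dominantSum, mul_sub, sum_sub_distrib]

theorem inv_pow_eq_two_sub (ha : a ^ k = ∑ i ∈ range k, a ^ i) : a⁻¹ ^ k = 2 - a := by
  rw [inv_pow]
  exact inv_eq_of_mul_eq_one_right (pow_mul_two_sub_eq_one ha)

theorem dominantSum_succ (ha₀ : a ≠ 0) (ha : a ^ k = ∑ i ∈ range k, a ^ i) {u : ℕ → K}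
    (hu : (kBonacci K k).IsSolution u) (i : ℕ) :
    dominantSum k a u (i + 1) = a * dominantSum k a u i := by
  have hshift : dominantSum k a u (i + 1) = ∑ j ∈ range (k + 1), (1 - a⁻¹ ^ j) * u (i + j) := by
    rw [sum_range_succ', pow_zero, sub_self, zero_mul, add_zero]
    simp only [dominantSum, add_assoc, add_comm 1]
  rw [hshift, sum_range_succ, kBonacci_isSolution_iff.1 hu, inv_pow_eq_two_sub ha, mul_sum,
    ← sum_add_distrib, dominantSum, mul_sum]
  refine sum_congr rfl fun j _ ↦ ?_
  linear_combination a⁻¹ ^ j * u (i + j) * mul_inv_cancel₀ ha₀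

theorem dominantSum_eq_zero (ha₀ : a ≠ 0) (ha : a ^ k = ∑ i ∈ range k, a ^ i) {u : ℕ → K}
    (hu : (kBonacci K k).IsSolution u) (h₀ : dominantSum k a u 0 = 0) (i : ℕ) :
    dominantSum k a u i = 0 := by
  induction i with
  | zero => exact h₀
  | succ i ih => rw [dominantSum_succ ha₀ ha hu, ih, mul_zero]

theorem kBonacci_isSolution_zpow (ha₀ : a ≠ 0) (ha : a ^ k = ∑ i ∈ range k, a ^ i) (c : K)
    (s : ℤ) : (kBonacci K k).IsSolution fun i ↦ c * a ^ ((i : ℤ) + s) := by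
  refine kBonacci_isSolution_iff.2 fun i ↦ ?_
  simp only [zpow_add₀ ha₀, zpow_natCast, pow_add, ha, mul_sum, sum_mul]

theorem dominantSum_zpow (ha₀ : a ≠ 0) (ha : a ^ k = ∑ i ∈ range k, a ^ i) (c : K) :
    dominantSum k a (fun i ↦ c * a ^ ((i : ℤ) + (1 - k))) 0
      = c * (2 + ((k : K) + 1) * (a - 2)) := by
  have hterm : ∀ j ∈ range k, (1 - a⁻¹ ^ (j + 1)) * (c * a ^ (((0 + j : ℕ) : ℤ) + (1 - k)))
      = c * (2 - a) * (a * a ^ j - 1) := by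
    intro j _
    have hinv : a⁻¹ ^ (j + 1) * a ^ (j + 1) = 1 := by
      rw [← mul_pow, inv_mul_cancel₀ ha₀, one_pow]
    have hzpow : a ^ (((0 + j : ℕ) : ℤ) + (1 - k)) = a ^ (j + 1) * (2 - a) := by
      rw [← inv_pow_eq_two_sub ha, inv_pow, zero_add, ← add_sub_assoc, zpow_sub₀ ha₀,
        div_eq_mul_inv]
      norm_cast
    rw [hzpow]
    linear_combination -c * (2 - a) * hinv
  rw [dominantSum, sum_congr rfl hterm, ← mul_sum, sum_sub_distrib, ← mul_sum, ← ha, sum_const,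
    card_range, nsmul_one]
  linear_combination c * a * pow_mul_two_sub_eq_one ha

end DominantComponent

section DominantRoot

variable {K : Type*} [Field K] [LinearOrder K] [IsStrictOrderedRing K] {k : ℕ} {a : K}

theorem two_le_of_one_lt_root (ha₁ : 1 < a) (ha : a ^ k = ∑ i ∈ range k, a ^ i) : 2 ≤ k := by
  by_contra! hk
  interval_cases k
  · simp at ha
  · simp [ha₁.ne'] at ha

theorem root_lt_two (ha₁ : 1 < a) (ha : a ^ k = ∑ i ∈ range k, a ^ i) : a < 2 := by
  have hpow : 0 < a ^ k := pow_pos (one_pos.trans ha₁) k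
  have hprod : 0 < a ^ k * (2 - a) := by rw [pow_mul_two_sub_eq_one ha]; exact one_pos
  exact sub_pos.1 (pos_of_mul_pos_right hprod hpow.le)

theorem sub_one_le_binet_denominator (ha₁ : 1 < a) (ha : a ^ k = ∑ i ∈ range k, a ^ i) :
    a - 1 ≤ 2 + ((k : K) + 1) * (a - 2) := by
  have hk : (k : K) ≤ a ^ k :=
    calc (k : K) = ∑ _i ∈ range k, (1 : K) := by simp
      _ ≤ ∑ i ∈ range k, a ^ i := sum_le_sum fun i _ ↦ one_le_pow₀ ha₁.le
      _ = a ^ k := ha.symm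
  have hk₁ : (k : K) * (2 - a) ≤ 1 :=
    calc (k : K) * (2 - a) ≤ a ^ k * (2 - a) :=
          mul_le_mul_of_nonneg_right hk (sub_nonneg.2 (root_lt_two ha₁ ha).le)
      _ = 1 := pow_mul_two_sub_eq_one ha
  linear_combination hk₁

theorem binet_denominator_pos (ha₁ : 1 < a) (ha : a ^ k = ∑ i ∈ range k, a ^ i) :
    0 < 2 + ((k : K) + 1) * (a - 2) :=
  (sub_pos.2 ha₁).trans_le (sub_one_le_binet_denominator ha₁ ha)

theorem binetCoeff_pos (ha₁ : 1 < a) (ha : a ^ k = ∑ i ∈ range k, a ^ i) :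
    0 < binetCoeff k a :=
  div_pos (sub_pos.2 ha₁) (binet_denominator_pos ha₁ ha)

theorem binetCoeff_le_one (ha₁ : 1 < a) (ha : a ^ k = ∑ i ∈ range k, a ^ i) :
    binetCoeff k a ≤ 1 :=
  div_le_one_of_le₀ (sub_one_le_binet_denominator ha₁ ha) (binet_denominator_pos ha₁ ha).le

theorem abs_le_of_dominantSum_eq_zero (ha₁ : 1 < a) (ha : a ^ k = ∑ i ∈ range k, a ^ i)
    {e : ℕ → K} {B : K} (he : (kBonacci K k).IsSolution e) (h₀ : dominantSum k a e 0 = 0)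
    (hinit : ∀ i ≤ k, |e i| ≤ B) (i : ℕ) : |e i| ≤ B := by
  have ha₀ : 0 < a := one_pos.trans ha₁
  have hk : 0 < k := two_pos.trans_le (two_le_of_one_lt_root ha₁ ha)
  have hweight : ∀ j < k, 0 < 1 - a⁻¹ ^ (j + 1) := fun j _ ↦
    sub_pos.2 (pow_lt_one₀ (inv_pos.2 ha₀).le (inv_lt_one_of_one_lt₀ ha₁) j.succ_ne_zero)
  exact abs_le_of_forall_sum_eq_zero hk hweight (kBonacci_isSolution_add_succ he)
    (dominantSum_eq_zero ha₀.ne' ha he h₀) hinit i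

end DominantRoot

/-- `F` is the k-generalized Fibonacci sequence from the index `2 - k` on; its values at smaller
indices are left free. -/
structure IsKFibonacci (k : ℕ) (F : ℤ → ℤ) : Prop where
  eq_zero : ∀ n : ℤ, 2 - (k : ℤ) ≤ n → n ≤ 0 → F n = 0
  one : F 1 = 1
  eq_sum : ∀ n : ℤ, 2 ≤ n → F n = ∑ i ∈ range k, F (n - 1 - (i : ℤ))

namespace IsKFibonacci

section Values

variable {k : ℕ} {F : ℤ → ℤ}

theorem two (hF : IsKFibonacci k F) (hk : 0 < k) : F 2 = 1 := by
  rw [hF.eq_sum 2 le_rfl, sum_eq_single_of_mem 0 (mem_range.2 hk)]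
  · exact hF.one
  · intro i hi hi₀
    have := mem_range.1 hi
    exact hF.eq_zero _ (by lia) (by lia)

theorem nonneg (hF : IsKFibonacci k F) {n : ℤ} (hn : 2 - (k : ℤ) ≤ n) : 0 ≤ F n := by
  obtain ⟨i, rfl⟩ : ∃ i : ℕ, n = 2 - (k : ℤ) + i := ⟨(n + k - 2).toNat, by lia⟩
  induction i using Nat.strong_induction_on with
  | _ i ih =>
    obtain hi | hi | hi : 2 - (k : ℤ) + i ≤ 0 ∨ 2 - (k : ℤ) + i = 1 ∨ 2 ≤ 2 - (k : ℤ) + i := by lia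
    · exact (hF.eq_zero _ hn hi).ge
    · rw [hi, hF.one]
      exact zero_le_one
    · rw [hF.eq_sum _ hi]
      refine sum_nonneg fun j hj ↦ ?_
      have hjk := mem_range.1 hj
      have hprev : 2 - (k : ℤ) + i - 1 - j = 2 - (k : ℤ) + (i - 1 - j : ℕ) := by lia
      exact hprev ▸ ih (i - 1 - j) (by lia) (by lia)

theorem pos (hF : IsKFibonacci k F) (hk : 0 < k) {n : ℤ} (hn : 1 ≤ n) : 0 < F n := by
  induction n, hn using Int.leInduction with
  | base => rw [hF.one]; exact one_pos
  | succ n hn ih =>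
    rw [hF.eq_sum _ (by lia)]
    refine ih.trans_le ?_
    have hle := single_le_sum (f := fun i : ℕ ↦ F (n + 1 - 1 - i))
      (fun i hi ↦ hF.nonneg (by have := mem_range.1 hi; lia)) (mem_range.2 hk)
    simpa using hle

end Values

section Binet

variable {K : Type*} [Field K] {k : ℕ} {F : ℤ → ℤ} {a : K}

theorem isSolution (hF : IsKFibonacci k F) :
    (kBonacci K k).IsSolution fun i ↦ (F ((i : ℤ) + 2 - k) : K) := by
  refine kBonacci_isSolution_iff.2 fun i ↦ ?_
  rw [hF.eq_sum _ (by lia), ← sum_range_reflect]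
  push_cast
  refine sum_congr rfl fun j hj ↦ ?_
  have := mem_range.1 hj
  congr 2
  lia

theorem dominantSum_eq (hF : IsKFibonacci k F) (hk : 0 < k)
    (ha : a ^ k = ∑ i ∈ range k, a ^ i) :
    dominantSum k a (fun i ↦ (F ((i : ℤ) + 2 - k) : K)) 0 = a - 1 := by
  rw [dominantSum, sum_eq_single_of_mem (k - 1) (mem_range.2 (by lia))]
  · rw [Nat.sub_add_cancel hk, inv_pow_eq_two_sub ha,
      show ((0 + (k - 1) : ℕ) : ℤ) + 2 - k = 1 by lia, hF.one]
    push_cast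
    ring
  · intro j hj hjk
    have := mem_range.1 hj
    rw [hF.eq_zero _ (by lia) (by lia), Int.cast_zero, mul_zero]

variable [LinearOrder K] [IsStrictOrderedRing K]

theorem abs_sub_binet_le_one_of_le_two (hF : IsKFibonacci k F) (ha₁ : 1 < a)
    (ha : a ^ k = ∑ i ∈ range k, a ^ i) {n : ℤ} (hnk : 2 - (k : ℤ) ≤ n) (hn : n ≤ 2) :
    |(F n : K) - binetCoeff k a * a ^ (n - 1)| ≤ 1 := by
  have ha₀ : 0 < a := one_pos.trans ha₁
  have hk : 0 < k := two_pos.trans_le (two_le_of_one_lt_root ha₁ ha)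
  have hc₀ := binetCoeff_pos ha₁ ha
  have hc₁ := binetCoeff_le_one ha₁ ha
  have hpos : 0 < binetCoeff k a * a ^ (n - 1) := mul_pos hc₀ (zpow_pos ha₀ _)
  rcases le_or_gt n 0 with hn₀ | hn₀
  · have hle : binetCoeff k a * a ^ (n - 1) ≤ 1 :=
      mul_le_one₀ hc₁ (zpow_nonneg ha₀.le _) (zpow_le_one_of_nonpos₀ ha₁.le (by lia))
    rw [hF.eq_zero n hnk hn₀, Int.cast_zero, zero_sub, abs_neg, abs_of_pos hpos]
    exact hle
  · have hFn : F n = 1 := by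
      obtain rfl | rfl : n = 1 ∨ n = 2 := by lia
      exacts [hF.one, hF.two hk]
    have hle : binetCoeff k a * a ^ (n - 1) ≤ 2 :=
      calc binetCoeff k a * a ^ (n - 1) ≤ 1 * a ^ (1 : ℤ) := by gcongr; exacts [ha₁.le, by lia]
        _ = a := by rw [one_mul, zpow_one]
        _ ≤ 2 := (root_lt_two ha₁ ha).le
    rw [hFn, Int.cast_one, abs_le]
    constructor <;> linarith

theorem abs_sub_binet_le_one (hF : IsKFibonacci k F) (ha₁ : 1 < a)
    (ha : a ^ k = ∑ i ∈ range k, a ^ i) {n : ℤ} (hn : 2 - (k : ℤ) ≤ n) :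
    |(F n : K) - binetCoeff k a * a ^ (n - 1)| ≤ 1 := by
  have ha₀ : a ≠ 0 := (one_pos.trans ha₁).ne'
  have hk : 0 < k := two_pos.trans_le (two_le_of_one_lt_root ha₁ ha)
  let e : ℕ → K := fun i ↦ F ((i : ℤ) + 2 - k) - binetCoeff k a * a ^ ((i : ℤ) + (1 - k))
  have he : (kBonacci K k).IsSolution e :=
    ((kBonacci K k).is_sol_iff_mem_solSpace e).2 <|
      sub_mem hF.isSolution (kBonacci_isSolution_zpow ha₀ ha (binetCoeff k a) (1 - k))
  have he₀ : dominantSum k a e 0 = 0 := by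
    rw [dominantSum_sub, hF.dominantSum_eq hk ha, dominantSum_zpow ha₀ ha, binetCoeff,
      div_mul_cancel₀ _ (binet_denominator_pos ha₁ ha).ne', sub_self]
  have hindex (i : ℕ) : (i : ℤ) + (1 - k) = (i : ℤ) + 2 - k - 1 := by ring
  have hinit : ∀ i ≤ k, |e i| ≤ 1 := fun i hi ↦ by
    simp only [e, hindex]
    exact hF.abs_sub_binet_le_one_of_le_two ha₁ ha (by lia) (by lia)
  obtain ⟨i, rfl⟩ : ∃ i : ℕ, n = (i : ℤ) + 2 - k := ⟨(n + k - 2).toNat, by lia⟩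
  rw [← hindex]
  exact abs_le_of_dominantSum_eq_zero ha₁ ha he he₀ hinit i

end Binet

end IsKFibonacci

section Digits

/-- The integer written in base ten as `ℓ` digits `d₁`, `m` digits `d₂` and `ℓ` digits `d₁`.
The divisions by `9` are exact: `(10 ^ t - 1) / 9` is the repunit with `t` digits. -/
def threeBlocks (d₁ d₂ : ℤ) (ℓ m : ℕ) : ℤ :=
  d₁ * ((10 ^ ℓ - 1) / 9) * 10 ^ (ℓ + m) + d₂ * ((10 ^ m - 1) / 9) * 10 ^ ℓ
    + d₁ * ((10 ^ ℓ - 1) / 9)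

theorem nine_mul_repunit (t : ℕ) : (9 : ℤ) * ((10 ^ t - 1) / 9) = 10 ^ t - 1 :=
  Int.mul_ediv_cancel' (by simpa using sub_dvd_pow_sub_pow (10 : ℤ) 1 t)

theorem nine_mul_threeBlocks (d₁ d₂ : ℤ) (ℓ m : ℕ) :
    9 * threeBlocks d₁ d₂ ℓ m
      = 10 ^ (ℓ + m) * (d₁ * 10 ^ ℓ - (d₁ - d₂)) + ((d₁ - d₂) * 10 ^ ℓ - d₁) := by
  rw [threeBlocks, pow_add]
  linear_combination
    (d₁ * (10 ^ ℓ * 10 ^ m) + d₁) * nine_mul_repunit ℓ + d₂ * 10 ^ ℓ * nine_mul_repunit m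

theorem leading_factor_pos {d₁ d₂ : ℤ} (hd₂ : 0 ≤ d₂) {ℓ m : ℕ}
    (hpos : 0 < threeBlocks d₁ d₂ ℓ m) : 0 < d₁ * 10 ^ ℓ - (d₁ - d₂) := by
  have hprod : 0 < (10 ^ (ℓ + m) + 1) * (d₁ * 10 ^ ℓ - (d₁ - d₂)) := by
    have hd₂ℓ : 0 ≤ d₂ * 10 ^ ℓ := by positivity
    linear_combination 9 * hpos + nine_mul_threeBlocks d₁ d₂ ℓ m + hd₂ℓ + hd₂
  exact pos_of_mul_pos_right hprod (by positivity)

variable {K : Type*} [Field K] [LinearOrder K] [IsStrictOrderedRing K]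

theorem abs_lower_blocks_le {d₁ d₂ P : K} (hd₁ : 0 ≤ d₁) (hd₂ : 0 ≤ d₂) (hP : 1 ≤ P) :
    |(d₁ - d₂) * P - d₁| ≤ P * (d₁ * P - (d₁ - d₂)) := by
  have hd₁P : 0 ≤ d₁ * (P - 1) := mul_nonneg hd₁ (sub_nonneg.2 hP)
  have hd₂P : 0 ≤ d₂ * P := mul_nonneg hd₂ (zero_le_one.trans hP)
  have hd₁PP : 0 ≤ d₁ * (P - 1) * (P - 1) := mul_nonneg hd₁P (sub_nonneg.2 hP)
  rw [abs_le]
  constructor <;> linarith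

theorem abs_nine_div_mul_sub_one_lt {D P M x y t : K} (hD : 1 ≤ D) (hP : 1 ≤ P) (hM : 0 < M)
    (hy : 9 * y = P * M * D + t) (ht : |t| ≤ P * D) (hxy : |y - x| ≤ 1) :
    |9 / D * (P * M)⁻¹ * x - 1| < 11 * M⁻¹ := by
  have hP₀ : 0 < P := one_pos.trans_le hP
  have hD₀ : 0 < D := one_pos.trans_le hD
  have hPDM : 0 < P * D * M := mul_pos (mul_pos hP₀ hD₀) hM
  have hPD : 1 ≤ P * D := one_le_mul_of_one_le_of_one_le hP hD
  have hrel : 9 / D * (P * M)⁻¹ * x - 1 = (t - 9 * (y - x)) / (P * D * M) := by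
    field_simp
    linear_combination hy
  have hnum : |t - 9 * (y - x)| < 11 * (P * D) :=
    calc |t - 9 * (y - x)| ≤ |t| + |9 * (y - x)| := abs_sub _ _
      _ = |t| + 9 * |y - x| := by rw [abs_mul, abs_of_pos (by norm_num : (0 : K) < 9)]
      _ < 11 * (P * D) := by linarith
  rw [hrel, abs_div, abs_of_pos hPDM, div_lt_iff₀ hPDM]
  calc |t - 9 * (y - x)| < 11 * (P * D) := hnum
    _ = 11 * M⁻¹ * (P * D * M) := by field_simp

end Digits

theorem Gamma2_small_general {k : ℕ} {F : ℤ → ℤ} (hF : IsKFibonacci k F) {α : ℝ} (hα : 1 < α)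
    (hroot : α ^ k = ∑ i ∈ range k, α ^ i) {n : ℤ} (hn : 1 ≤ n) {d₁ d₂ ℓ m : ℕ}
    (heq : F n = threeBlocks d₁ d₂ ℓ m) :
    |9 / ((d₁ : ℝ) * 10 ^ ℓ - ((d₁ : ℝ) - (d₂ : ℝ))) * (10 : ℝ) ^ (-((ℓ : ℤ) + m))
        * binetCoeff k α * α ^ (n - 1) - 1| < 11 * (10 : ℝ) ^ (-(m : ℤ)) := by
  have hk : 2 ≤ k := two_le_of_one_lt_root hα hroot
  have hP : (1 : ℝ) ≤ 10 ^ ℓ := one_le_pow₀ (by norm_num)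
  have hD : (1 : ℝ) ≤ d₁ * 10 ^ ℓ - (d₁ - d₂) := by
    exact_mod_cast leading_factor_pos d₂.cast_nonneg (heq ▸ hF.pos (by lia) hn)
  have hy : (9 : ℝ) * F n = 10 ^ ℓ * 10 ^ m * (d₁ * 10 ^ ℓ - (d₁ - d₂))
      + ((d₁ - d₂) * 10 ^ ℓ - d₁) := by
    rw [← pow_add, heq]
    exact_mod_cast nine_mul_threeBlocks d₁ d₂ ℓ m
  have hscale : (10 : ℝ) ^ (-((ℓ : ℤ) + m)) = (10 ^ ℓ * 10 ^ m)⁻¹ := by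
    rw [← pow_add, zpow_neg]
    norm_cast
  rw [mul_assoc _ (binetCoeff k α), hscale, zpow_neg, zpow_natCast]
  exact abs_nine_div_mul_sub_one_lt hD hP (by positivity) hy
    (abs_lower_blocks_le d₁.cast_nonneg d₂.cast_nonneg hP)
    (hF.abs_sub_binet_le_one hα hroot (by lia))

/-- Under the hypotheses of the main equation (k ≥ 2, n ≥ 9, n ≥ k + 1),
|(9/(d1·10^ℓ − (d1 − d2)))·10^{−(ℓ+m)}·f_k(α)·α^{n−1} − 1| < 11·10^{−m}. -/
theorem Gamma2_small
    (k : ℕ) (hk : 2 ≤ k) (F : ℤ → ℤ)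
    (hF0 : ∀ n : ℤ, 2 - (k : ℤ) ≤ n → n ≤ 0 → F n = 0)
    (hF1 : F 1 = 1)
    (hFrec : ∀ n : ℤ, 2 ≤ n → F n = ∑ i ∈ Finset.range k, F (n - 1 - (i : ℤ)))
    (α : ℝ) (hα : 1 < α) (hroot : α ^ k = ∑ i ∈ Finset.range k, α ^ i)
    (n : ℤ) (hn : 9 ≤ n) (hnk : (k : ℤ) + 1 ≤ n)
    (d1 d2 : ℕ) (hd1 : d1 ≤ 9) (hd2 : d2 ≤ 9) (hd1pos : 0 < d1) (hne : d1 ≠ d2)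
    (ℓ m : ℕ) (hℓ : 1 ≤ ℓ) (hm : 1 ≤ m)
    (heq : F n = (d1 : ℤ) * ((10 ^ ℓ - 1) / 9) * 10 ^ (ℓ + m)
        + (d2 : ℤ) * ((10 ^ m - 1) / 9) * 10 ^ ℓ
        + (d1 : ℤ) * ((10 ^ ℓ - 1) / 9)) :
    |9 / ((d1 : ℝ) * 10 ^ ℓ - ((d1 : ℝ) - (d2 : ℝ))) * (10 : ℝ) ^ (-((ℓ : ℤ) + m))
        * ((α - 1) / (2 + ((k : ℝ) + 1) * (α - 2))) * α ^ (n - 1) - 1|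
      < 11 * (10 : ℝ) ^ (-(m : ℤ)) :=
  Gamma2_small_general ⟨hF0, hF1, hFrec⟩ hα hroot (by lia) heq
end
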